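/- arXiv:1409.1874 — 2 statements merged into one kernel-verified Lean document; each statement's English description precedes it below -/
import Mathlib

section
/- Let 0 < α, η with η ≥ 2α², and suppose n is sufficiently large in terms of α and η. If G is an (η, α)-robust graph on n vertices, then for every pair of vertices x, y ∈ V(G) there exists an integer i with 1 ≤ i ≤ 1/α² such that the number of x,y-paths in G with exactly i internal vertices is at least (α⁴n)^i. -/
/-- Number of ordered pairs `(x, y)` with `x ∈ X`, `y ∈ Y` and `xy ∈ E(G)`. -/
noncomputable def eBetween {V : Type*} (G : SimpleGraph V) (X Y : Set V) : ℕ :=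
  {p : V × V | p.1 ∈ X ∧ p.2 ∈ Y ∧ G.Adj p.1 p.2}.ncard



lemma cubic_bound (β : ℝ) (hβ : 0 ≤ β) (k : ℕ) :
    1 + k * β + (k * (k - 1) / 2 : ℝ) * β ^ 2 + (k * (k - 1) * (k - 2) / 6 : ℝ) * β ^ 3
      ≤ (1 + β) ^ k := by
  induction k with
  | zero => simp
  | succ k ih =>
    have h3 : (0 : ℝ) ≤ k * (k - 1) * (k - 2) := by
      rcases k with _ | _ | k
      · simp
      · simp
      · push_cast
        have : (0 : ℝ) ≤ (k + 2) * (k + 1) * k := by positivity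
        nlinarith
    rw [pow_succ]
    have h4 := mul_le_mul_of_nonneg_right ih (by linarith : 0 ≤ 1 + β)
    refine le_trans ?_ h4
    have h5 : 0 ≤ (k * (k - 1) * (k - 2) : ℝ) * β ^ 4 := by positivity
    push_cast
    nlinarith

lemma poly_term (s : ℝ) (hs : 3 / 2 ≤ s) :
    6 * s ^ 3 * (s ^ 4 - 2 * s ^ 2) <
      (6 * s ^ 3 + 6 * s ^ 2 * (s ^ 2 - 7 / 3) + 3 * s * (s ^ 2 - 7 / 3) * (s ^ 2 - 10 / 3)
        + (s ^ 2 - 7 / 3) * (s ^ 2 - 10 / 3) * (s ^ 2 - 13 / 3)) * (s ^ 2 + 4 / 3) := by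
  obtain ⟨t, rfl⟩ : ∃ t, s = t + 3 / 2 := ⟨s - 3 / 2, by ring⟩
  have ht : 0 ≤ t := by linarith
  have h3 := mul_nonneg ht (sq_nonneg (t ^ 2 - 3/2))
  have h4 := mul_nonneg ht (sq_nonneg (t ^ 2 - t))
  have h6 := (sq_nonneg (t ^ 3 - t))
  have h7 := (sq_nonneg (t ^ 2 - 5/4))
  have h8 := mul_nonneg ht (sq_nonneg (t  - 5/4))
  have h9 := mul_nonneg (pow_nonneg ht 2) (sq_nonneg (t  - 5/4))
  have h10 := mul_nonneg (pow_nonneg ht 3) (sq_nonneg (t  - 5/4))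
  have h11 := mul_nonneg (pow_nonneg ht 4) (sq_nonneg (t  - 5/4))
  have h12 := (sq_nonneg (t  - 5/4))
  linarith [pow_nonneg ht 2, pow_nonneg ht 3, pow_nonneg ht 4, pow_nonneg ht 5, pow_nonneg ht 6, pow_nonneg ht 7, pow_nonneg ht 8]

lemma poly_inv (s : ℝ) (hs : 2 ≤ s) :
    6 * s ^ 3 * (3 / 4 * (s ^ 2 - 3)) <
      (6 * s ^ 3 + 6 * s ^ 2 * (s ^ 2 - 10 / 3) + 3 * s * (s ^ 2 - 10 / 3) * (s ^ 2 - 13 / 3)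
        + (s ^ 2 - 10 / 3) * (s ^ 2 - 13 / 3) * (s ^ 2 - 16 / 3)) := by
  obtain ⟨t, rfl⟩ : ∃ t, s = t + 2 := ⟨s - 2, by ring⟩
  have ht : 0 ≤ t := by linarith
  have h7 := (sq_nonneg (t ^ 2 - 1/4))
  have h8 := mul_nonneg ht (sq_nonneg (t  - 5/8))
  have h9 := mul_nonneg (pow_nonneg ht 2) (sq_nonneg (t  - 5/8))
  have h10 := mul_nonneg (pow_nonneg ht 3) (sq_nonneg (t  - 5/8))
  have h12 := (sq_nonneg (t  - 5/8))
  linarith [pow_nonneg ht 2, pow_nonneg ht 3, pow_nonneg ht 4, pow_nonneg ht 5, pow_nonneg ht 6]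

lemma term_ineq (α : ℝ) (hα : 0 < α) (J : ℕ) (hJ : 1 ≤ J) (h1 : (J : ℝ) * α ^ 2 ≤ 1)
    (h2 : 1 ≤ (J + 4 / 3 : ℝ) * α ^ 2) :
    1 - 2 * α ^ 2 < (1 + α) ^ (J - 1) * (2 * α ^ 2 - α ^ 2 * α ^ 2 * J) := by
  have hJ' : (1 : ℝ) ≤ J := by exact_mod_cast hJ
  set s := √(J + 4 / 3 : ℝ) with hs
  have hs2 : s ^ 2 = J + 4 / 3 := Real.sq_sqrt (by linarith)
  have hs0 : 0 ≤ s := Real.sqrt_nonneg _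
  have hs1 : 3 / 2 ≤ s := by nlinarith
  have hspos : 0 < s := by linarith
  have hαs : 1 / s ≤ α := by
    rw [div_le_iff₀ hspos]
    rw [← hs2] at h2
    nlinarith [mul_pos hα hspos]
  have hβ : 0 ≤ 1 / s := by positivity
  have hT := cubic_bound (1 / s) hβ (J - 1)
  have hpow : (1 + 1 / s) ^ (J - 1) ≤ (1 + α) ^ (J - 1) := by gcongr
  have hk : ((J - 1 : ℕ) : ℝ) = s ^ 2 - 7 / 3 := by
    rw [Nat.cast_sub hJ, hs2]; push_cast; ring
  rw [hk] at hT
  set P := (1 + α) ^ (J - 1) with hP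
  have hPT : (6 * s ^ 3 + 6 * s ^ 2 * (s ^ 2 - 7 / 3) + 3 * s * (s ^ 2 - 7 / 3) * (s ^ 2 - 10 / 3)
        + (s ^ 2 - 7 / 3) * (s ^ 2 - 10 / 3) * (s ^ 2 - 13 / 3)) ≤ 6 * s ^ 3 * P := by
    have := mul_le_mul_of_nonneg_left (hT.trans hpow) (by positivity : 0 ≤ 6 * s ^ 3)
    refine le_trans (le_of_eq ?_) this
    field_simp
    ring
  have hq : s ^ 4 - 2 * s ^ 2 < P * (s ^ 2 + 4 / 3) := by
    have h := (poly_term s hs1).trans_le (mul_le_mul_of_nonneg_right hPT (by positivity))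
    rw [mul_assoc (6 * s ^ 3) P] at h
    exact lt_of_mul_lt_mul_left h (by positivity)
  have hb : 1 / s ^ 2 ≤ α ^ 2 := by
    rw [div_le_iff₀ (by positivity)]; rw [hs2]; linarith
  set b := 1 / s ^ 2 with hbdef
  have hbs : b * s ^ 2 = 1 := by rw [hbdef]; field_simp
  have hbJ : b * J ≤ 1 := by nlinarith [hbs, hs2, show 0 ≤ b by positivity]
  have hb0 : 0 < b := by positivity
  have hmono : 2 * b - b * b * J ≤ 2 * α ^ 2 - α ^ 2 * α ^ 2 * J := by
    nlinarith [mul_nonneg (sub_nonneg.2 hb) (by linarith : 0 ≤ 2 - (α ^ 2 * J + b * J))]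
  have hP0 : 0 < P := by positivity
  have hlast : 1 - 2 * b < P * (2 * b - b * b * J) := by
    have h := mul_lt_mul_of_pos_left hq (by positivity : 0 < b * b)
    have e1 : b * b * (s ^ 4 - 2 * s ^ 2) = 1 - 2 * b := by
      have : b * b * (s ^ 4 - 2 * s ^ 2) = (b * s ^ 2) ^ 2 - 2 * b * (b * s ^ 2) := by ring
      rw [this, hbs]; ring
    have e2 : b * b * (P * (s ^ 2 + 4 / 3)) = P * (2 * b - b * b * J) := by
      have hJs : (J : ℝ) = s ^ 2 - 4 / 3 := by linarith
      have : P * (2 * b - b * b * J) = P * (2 * b - b * (b * s ^ 2) + b * b * (4 / 3)) := by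
        rw [hJs]; ring
      rw [this]
      have : b * b * (P * (s ^ 2 + 4 / 3)) = P * (b * (b * s ^ 2) + b * b * (4 / 3)) := by ring
      rw [this, hbs]; ring
    rwa [e1, e2] at h
  nlinarith [mul_le_mul_of_nonneg_left hmono hP0.le]

lemma inv_end (α : ℝ) (hα : 0 < α) (K : ℕ) (h1 : (K + 7 / 3 : ℝ) * α ^ 2 ≤ 1)
    (h2 : 1 ≤ (K + 10 / 3 : ℝ) * α ^ 2) :
    1 - 2 * α ^ 2 < (1 + α) ^ K * (1 - α ^ 2 * (K + 1)) := by
  rcases Nat.eq_zero_or_pos K with rfl | hK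
  · simp; nlinarith
  have hK' : (1 : ℝ) ≤ K := by exact_mod_cast hK
  set s := √(K + 10 / 3 : ℝ) with hs
  have hs2 : s ^ 2 = K + 10 / 3 := Real.sq_sqrt (by linarith)
  have hs0 : 0 ≤ s := Real.sqrt_nonneg _
  have hs1 : 2 ≤ s := by nlinarith
  have hspos : 0 < s := by linarith
  have hαs : 1 / s ≤ α := by
    rw [div_le_iff₀ hspos]
    rw [← hs2] at h2
    nlinarith [mul_pos hα hspos]
  have hβ : 0 ≤ 1 / s := by positivity
  have hT := cubic_bound (1 / s) hβ K
  have hpow : (1 + 1 / s) ^ K ≤ (1 + α) ^ K := by gcongr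
  have hk : (K : ℝ) = s ^ 2 - 10 / 3 := by linarith
  set P := (1 + α) ^ K with hP
  have hPT : (6 * s ^ 3 + 6 * s ^ 2 * (s ^ 2 - 10 / 3) + 3 * s * (s ^ 2 - 10 / 3) * (s ^ 2 - 13 / 3)
        + (s ^ 2 - 10 / 3) * (s ^ 2 - 13 / 3) * (s ^ 2 - 16 / 3)) ≤ 6 * s ^ 3 * P := by
    have := mul_le_mul_of_nonneg_left (hT.trans hpow) (by positivity : 0 ≤ 6 * s ^ 3)
    refine le_trans (le_of_eq ?_) this
    rw [hk]
    field_simp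
    ring
  have hq : 3 / 4 * (s ^ 2 - 3) < P := by
    have h := (poly_inv s hs1).trans_le hPT
    exact lt_of_mul_lt_mul_left h (by positivity)
  have hq' : 3 / 4 * (K + 1 / 3) < P := by rw [hs2] at hq; linarith
  have hpos : 0 < 1 - α ^ 2 * (K + 1) := by nlinarith [sq_pos_of_pos hα]
  have := mul_lt_mul_of_pos_right hq' hpos
  nlinarith [mul_nonneg (sub_nonneg.2 hK') (sub_nonneg.2 h1)]

lemma inv_all (α : ℝ) (hα : 0 < α) (K : ℕ) (h1 : (K + 7 / 3 : ℝ) * α ^ 2 ≤ 1)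
    (h2 : 1 ≤ (K + 10 / 3 : ℝ) * α ^ 2) (k : ℕ) (hk : k ≤ K) :
    1 - 2 * α ^ 2 < (1 + α) ^ k * (1 - α ^ 2 * (k + 1)) := by
  by_cases hc : α ≤ 1 - α ^ 2 * (k + 1)
  · have key : ∀ m : ℕ, α ≤ 1 - α ^ 2 * (m + 1) →
        1 - α ^ 2 ≤ (1 + α) ^ m * (1 - α ^ 2 * (m + 1)) := by
      intro m
      induction m with
      | zero => intro _; simp
      | succ m ih =>
        intro hm
        push_cast at hm ⊢
        have := ih (by nlinarith)
        refine this.trans ?_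
        rw [pow_succ (1 + α) m, mul_assoc]
        refine mul_le_mul_of_nonneg_left ?_ (by positivity)
        nlinarith
    have := key k hc
    nlinarith
  · have key : ∀ m : ℕ, k ≤ m → (1 + α) ^ m * (1 - α ^ 2 * (m + 1)) ≤
        (1 + α) ^ k * (1 - α ^ 2 * (k + 1)) := by
      intro m hm
      induction m, hm using Nat.le_induction with
      | base => exact le_rfl
      | succ m hm ih =>
        refine le_trans ?_ ih
        push_cast
        rw [pow_succ (1 + α) m, mul_assoc]
        have hm' : (k : ℝ) ≤ m := by exact_mod_cast hm
        refine mul_le_mul_of_nonneg_left ?_ (by positivity)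
        push Not at hc
        nlinarith [mul_le_mul_of_nonneg_left hm' (sq_nonneg α)]
    exact (inv_end α hα K h1 h2).trans_le (key K hk)

lemma num_exists (α : ℝ) (hα : 0 < α) (ha : 2 * α ^ 2 < 1) :
    ∃ J : ℕ, 1 ≤ J ∧ (J : ℝ) * α ^ 2 ≤ 1 ∧
      (∀ j : ℕ, 1 ≤ j → j < J → 1 - 2 * α ^ 2 < (1 + α) ^ (j - 1) * (1 - α ^ 2 * j)) ∧
      1 - 2 * α ^ 2 < (1 + α) ^ (J - 1) * (2 * α ^ 2 - α ^ 2 * α ^ 2 * J) := by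
  have ha0 : 0 < α ^ 2 := by positivity
  have hinv : 2 < 1 / α ^ 2 := by rw [lt_div_iff₀ ha0]; linarith
  set r := 1 / α ^ 2 with hr
  have hra : r * α ^ 2 = 1 := by rw [hr]; field_simp
  have hJ1 : 1 ≤ ⌊r - 1 / 3⌋₊ := by
    apply Nat.le_floor; push_cast; linarith
  have hle : (⌊r - 1 / 3⌋₊ : ℝ) ≤ r - 1 / 3 := Nat.floor_le (by linarith)
  have hlt : r - 1 / 3 < ⌊r - 1 / 3⌋₊ + 1 := Nat.lt_floor_add_one _
  generalize ⌊r - 1 / 3⌋₊ = J at *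
  refine ⟨J, hJ1, by nlinarith, ?_, term_ineq α hα J hJ1 (by nlinarith) (by nlinarith)⟩
  intro j hj hjJ
  obtain ⟨K, rfl⟩ : ∃ K, J = K + 2 := ⟨J - 2, by omega⟩
  obtain ⟨k, rfl⟩ : ∃ k, j = k + 1 := ⟨j - 1, by omega⟩
  push_cast at *
  have := inv_all α hα K (by nlinarith) (by nlinarith) k (by omega)
  simpa using this

lemma num_exists' (α : ℝ) (hα : 0 < α) (ha : 2 * α ^ 2 < 1) :
    ∃ J : ℕ, 1 ≤ J ∧ (J : ℝ) * α ^ 2 ≤ 1 ∧ ∃ a' : ℝ, α ^ 2 < a' ∧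
      (∀ j : ℕ, 1 ≤ j → j < J → 1 - 2 * α ^ 2 < (1 + α) ^ (j - 1) * (1 - a' * j)) ∧
      1 - 2 * α ^ 2 < (1 + α) ^ (J - 1) * (2 * α ^ 2 - α ^ 2 * a' * J) := by
  obtain ⟨J, h1, h2, h3, h4⟩ := num_exists α hα ha
  refine ⟨J, h1, h2, ?_⟩
  have e1 : ∀ᶠ a' in nhds (α ^ 2), ∀ j ∈ Finset.range J, 1 ≤ j →
      1 - 2 * α ^ 2 < (1 + α) ^ (j - 1) * (1 - a' * j) := by
    rw [Filter.eventually_all_finset]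
    intro j hj
    by_cases hj1 : 1 ≤ j
    · have : ContinuousAt (fun a' : ℝ => (1 + α) ^ (j - 1) * (1 - a' * j)) (α ^ 2) := by fun_prop
      filter_upwards [this.eventually (lt_mem_nhds (h3 j hj1 (Finset.mem_range.1 hj)))] with x hx _
      exact hx
    · exact Filter.Eventually.of_forall fun _ h => absurd h hj1
  have e2 : ∀ᶠ a' in nhds (α ^ 2),
      1 - 2 * α ^ 2 < (1 + α) ^ (J - 1) * (2 * α ^ 2 - α ^ 2 * a' * J) := by
    have : ContinuousAt (fun a' : ℝ => (1 + α) ^ (J - 1) * (2 * α ^ 2 - α ^ 2 * a' * J)) (α ^ 2) := by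
      fun_prop
    exact this.eventually (lt_mem_nhds h4)
  have e3 : ∀ᶠ a' in nhdsWithin (α ^ 2) (Set.Ioi (α ^ 2)), α ^ 2 < a' := self_mem_nhdsWithin
  obtain ⟨a', ⟨ha1, ha2⟩, ha3⟩ :=
    (((e1.and e2).filter_mono nhdsWithin_le_nhds).and e3).exists
  exact ⟨a', ha3, fun j hj hjJ => ha1 j (Finset.mem_range.2 hjJ) hj, ha2⟩

lemma nonpath_card {V : Type} [Fintype V] (G : SimpleGraph V) (x y : V) (hxy : x ≠ y) (i : ℕ) :
    Nat.card {p : G.Walk x y // ¬ p.IsPath ∧ p.length = i + 1} ≤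
      (i + 2) ^ 2 * Fintype.card V ^ (i - 1) := by
  classical
  have key : ∀ p : {p : G.Walk x y // ¬ p.IsPath ∧ p.length = i + 1},
      ∃ mm : Fin (i + 2) × Fin (i + 2), 1 ≤ mm.1.val ∧ mm.1.val ≤ i ∧ mm.1 ≠ mm.2 ∧
        p.1.getVert mm.1 = p.1.getVert mm.2 := by
    rintro ⟨p, hp, hl⟩
    have h0 : p.getVert 0 = x := p.getVert_zero
    have h1 : p.getVert (i + 1) = y := by rw [← hl]; exact p.getVert_length
    rw [← SimpleGraph.Walk.IsPath.getVert_injOn_iff] at hp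
    simp only [Set.InjOn, Set.mem_ofPred_eq, hl] at hp
    push Not at hp
    obtain ⟨a, ha, b, hb, hab, hne⟩ := hp
    by_cases hai : 1 ≤ a ∧ a ≤ i
    · exact ⟨(⟨a, by omega⟩, ⟨b, by omega⟩), hai.1, hai.2, by simpa using hne, hab⟩
    by_cases hbi : 1 ≤ b ∧ b ≤ i
    · exact ⟨(⟨b, by omega⟩, ⟨a, by omega⟩), hbi.1, hbi.2, by simpa using hne.symm, hab.symm⟩
    exfalso
    have ha' : a = 0 ∨ a = i + 1 := by omega
    have hb' : b = 0 ∨ b = i + 1 := by omega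
    rcases ha' with rfl | rfl <;> rcases hb' with rfl | rfl
    · exact hne rfl
    · rw [h0, h1] at hab; exact hxy hab
    · rw [h0, h1] at hab; exact hxy hab.symm
    · exact hne rfl
  choose mm hm1 hm2 hm3 hm4 using key
  let F : {p : G.Walk x y // ¬ p.IsPath ∧ p.length = i + 1} →
      (Fin (i + 2) × Fin (i + 2)) × (Fin (i - 1) → V) := fun p =>
    (mm p, fun r => p.1.getVert (if r.val + 1 < (mm p).1.val then r.val + 1 else r.val + 2))
  have hF : Function.Injective F := by
    intro p q hpq
    have e1 : mm p = mm q := congrArg Prod.fst hpq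
    have e2 := congrArg Prod.snd hpq
    have hother : ∀ k : ℕ, k ≤ i + 1 → k ≠ (mm p).1.val → p.1.getVert k = q.1.getVert k := by
      intro k hk hkm
      rcases Nat.eq_zero_or_pos k with rfl | hk0
      · simp
      by_cases hki : k = i + 1
      · have hp := p.1.getVert_length
        have hq := q.1.getVert_length
        rw [p.2.2] at hp
        rw [q.2.2] at hq
        rw [hki, hp, hq]
      have h1 := hm1 p
      have h2 := hm2 p
      by_cases hlt : k < (mm p).1.val
      · have := congrFun e2 ⟨k - 1, by omega⟩
        simp only [F, ← e1] at this
        rw [if_pos (by omega), show k - 1 + 1 = k by omega] at this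
        exact this
      · have := congrFun e2 ⟨k - 2, by omega⟩
        simp only [F, ← e1] at this
        rw [if_neg (by omega), show k - 2 + 2 = k by omega] at this
        exact this
    apply Subtype.ext
    apply SimpleGraph.Walk.ext_getVert_le_length (by rw [p.2.2, q.2.2])
    intro k hk
    rw [p.2.2] at hk
    by_cases hkm : k = (mm p).1.val
    · have h4 := hm4 q
      rw [← e1] at h4
      rw [hkm, hm4 p, h4]
      refine hother _ (by have := (mm p).2.isLt; omega) ?_
      intro h
      exact hm3 p (Fin.ext h.symm)
    · exact hother k hk hkm
  calc Nat.card {p : G.Walk x y // ¬ p.IsPath ∧ p.length = i + 1}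
      ≤ Nat.card ((Fin (i + 2) × Fin (i + 2)) × (Fin (i - 1) → V)) :=
        Nat.card_le_card_of_injective F hF
    _ = (i + 2) ^ 2 * Fintype.card V ^ (i - 1) := by
        simp [Nat.card_eq_fintype_card, sq]

open Classical in
lemma walk_split {V : Type} [Fintype V] (G : SimpleGraph V) (x y : V) (hxy : x ≠ y) (i : ℕ) :
    (G.adjMatrix ℕ ^ (i + 1)) x y ≤ Nat.card {p : G.Walk x y // p.IsPath ∧ p.length = i + 1}
      + (i + 2) ^ 2 * Fintype.card V ^ (i - 1) := by
  rw [SimpleGraph.adjMatrix_pow_apply_eq_card_walk]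
  refine le_trans ?_ (Nat.add_le_add_left (nonpath_card G x y hxy i) _)
  have hfin : Finite {p : G.Walk x y | p.length = i + 1} := inferInstance
  have hS : ({p : G.Walk x y | p.length = i + 1}).Finite := hfin
  rw [← Nat.card_eq_fintype_card]
  change Nat.card {p : G.Walk x y | p.length = i + 1} ≤
    Nat.card {p : G.Walk x y | p.IsPath ∧ p.length = i + 1} +
    Nat.card {p : G.Walk x y | ¬ p.IsPath ∧ p.length = i + 1}
  simp only [Nat.card_coe_set_eq]
  refine le_trans (Set.ncard_le_ncard ?_ ?_) (Set.ncard_union_le _ _)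
  · intro p hp
    by_cases h : p.IsPath
    · exact Or.inl ⟨h, hp⟩
    · exact Or.inr ⟨h, hp⟩
  · refine hS.subset ?_
    rintro p (hp | hp) <;> exact hp.2

open Classical in
lemma pigeon {V : Type} [Fintype V] (G : SimpleGraph V) (x v : V) (N : ℝ) (hN : 0 ≤ N) (j : ℕ)
    (hj : 1 ≤ j)
    (h : j * N ≤ ((Finset.univ.filter fun u => (∃ t, 1 ≤ t ∧ t ≤ j ∧
      N ^ (t - 1) ≤ (((G.adjMatrix ℕ ^ t) x u : ℕ) : ℝ)) ∧ G.Adj u v).card : ℝ)) :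
    ∃ t, 1 ≤ t ∧ t ≤ j ∧ N ^ t ≤ (((G.adjMatrix ℕ ^ (t + 1)) x v : ℕ) : ℝ) := by
  by_contra hcon
  push Not at hcon
  set S : ℕ → Finset V := fun t => Finset.univ.filter fun u =>
    N ^ (t - 1) ≤ (((G.adjMatrix ℕ ^ t) x u : ℕ) : ℝ) ∧ G.Adj u v with hS
  have hlt : ∀ t ∈ Finset.Icc 1 j, ((S t).card : ℝ) < N := by
    intro t ht
    rw [Finset.mem_Icc] at ht
    by_contra hge
    push Not at hge
    have h1 := hcon t ht.1 ht.2
    apply absurd h1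
    push Not
    have e : (((G.adjMatrix ℕ ^ (t + 1)) x v : ℕ) : ℝ) =
        ∑ u ∈ G.neighborFinset v, (((G.adjMatrix ℕ ^ t) x u : ℕ) : ℝ) := by
      rw [pow_succ, SimpleGraph.mul_adjMatrix_apply]
      push_cast
      rfl
    rw [e]
    calc N ^ t = N * N ^ (t - 1) := by
          obtain ⟨s, rfl⟩ : ∃ s, t = s + 1 := ⟨t - 1, by omega⟩
          simp [pow_succ, mul_comm]
      _ ≤ (S t).card * N ^ (t - 1) := by gcongr
      _ = ∑ u ∈ S t, N ^ (t - 1) := by simp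
      _ ≤ ∑ u ∈ S t, (((G.adjMatrix ℕ ^ t) x u : ℕ) : ℝ) := by
          apply Finset.sum_le_sum
          intro u hu
          simp only [hS, Finset.mem_filter] at hu
          exact hu.2.1
      _ ≤ _ := by
          apply Finset.sum_le_sum_of_subset_of_nonneg
          · intro u hu
            simp only [hS, Finset.mem_filter] at hu
            simpa using hu.2.2.symm
          · intros; positivity
  have hsub : (Finset.univ.filter fun u => (∃ t, 1 ≤ t ∧ t ≤ j ∧
      N ^ (t - 1) ≤ (((G.adjMatrix ℕ ^ t) x u : ℕ) : ℝ)) ∧ G.Adj u v) ⊆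
      (Finset.Icc 1 j).biUnion S := by
    intro u hu
    simp only [Finset.mem_filter, Finset.mem_univ, true_and] at hu
    obtain ⟨⟨t, h1, h2, h3⟩, h4⟩ := hu
    simp only [Finset.mem_biUnion, Finset.mem_Icc, hS, Finset.mem_filter, Finset.mem_univ, true_and]
    exact ⟨t, ⟨h1, h2⟩, h3, h4⟩
  have hc := (Finset.card_le_card hsub).trans Finset.card_biUnion_le
  have hc' : ((Finset.univ.filter fun u => (∃ t, 1 ≤ t ∧ t ≤ j ∧
      N ^ (t - 1) ≤ (((G.adjMatrix ℕ ^ t) x u : ℕ) : ℝ)) ∧ G.Adj u v).card : ℝ) ≤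
      ∑ t ∈ Finset.Icc 1 j, ((S t).card : ℝ) := by exact_mod_cast hc
  have : ∑ t ∈ Finset.Icc 1 j, ((S t).card : ℝ) < ∑ t ∈ Finset.Icc 1 j, N :=
    Finset.sum_lt_sum_of_nonempty ⟨1, by simp [hj]⟩ hlt
  simp at this
  linarith

open Classical in
lemma edge_step {V : Type} [Fintype V] (G : SimpleGraph V) (X Z : Finset V) (hXZ : X ⊆ Z) (D : ℝ)
    (hD : ∀ v, v ∉ Z → ((X.filter fun u => G.Adj u v).card : ℝ) ≤ D) :
    (eBetween G (X : Set V) (X : Set V)ᶜ : ℝ) ≤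
      X.card * ((Xᶜ.card : ℝ) - Zᶜ.card) + D * Zᶜ.card := by
  have e1 : eBetween G (X : Set V) (X : Set V)ᶜ =
      ∑ v ∈ Xᶜ, (X.filter fun u => G.Adj u v).card := by
    unfold eBetween
    have : {p : V × V | p.1 ∈ (X : Set V) ∧ p.2 ∈ (X : Set V)ᶜ ∧ G.Adj p.1 p.2} =
        ((Finset.univ.filter fun p : V × V => p.1 ∈ X ∧ p.2 ∈ Xᶜ ∧ G.Adj p.1 p.2 : Finset (V × V)) :
          Set (V × V)) := by
      ext p; simp
    rw [this, Set.ncard_coe_finset]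
    rw [Finset.card_eq_sum_card_fiberwise (f := Prod.snd) (t := Xᶜ)]
    · apply Finset.sum_congr rfl
      intro v hv
      apply Finset.card_bij (fun p _ => p.1)
      · rintro ⟨a, b⟩ h
        simp only [Finset.mem_filter, Finset.mem_univ, true_and] at h ⊢
        obtain ⟨⟨h1, h2, h3⟩, rfl⟩ := h
        exact ⟨h1, h3⟩
      · rintro ⟨a, b⟩ h ⟨a', b'⟩ h' hh
        simp only [Finset.mem_filter] at h h'
        ext
        · exact hh
        · exact h.2.trans h'.2.symm
      · intro u hu
        simp only [Finset.mem_filter] at hu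
        exact ⟨(u, v), by simp [hu.1, hu.2, Finset.mem_compl.1 hv], rfl⟩
    · intro p hp
      simp only [Finset.coe_filter, Set.mem_ofPred_eq] at hp
      exact hp.2.2.1
  rw [e1]
  push_cast
  have hsub : Zᶜ ⊆ Xᶜ := Finset.compl_subset_compl.2 hXZ
  rw [← Finset.sum_sdiff hsub]
  have hcard : ((Xᶜ \ Zᶜ).card : ℝ) = (Xᶜ.card : ℝ) - Zᶜ.card := by
    rw [Finset.card_sdiff_of_subset hsub, Nat.cast_sub (Finset.card_le_card hsub)]
  apply add_le_add
  · calc _ ≤ ∑ v ∈ Xᶜ \ Zᶜ, (X.card : ℝ) := by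
          apply Finset.sum_le_sum
          intro v _
          exact_mod_cast Finset.card_filter_le _ _
      _ = _ := by rw [Finset.sum_const, nsmul_eq_mul, hcard, mul_comm]
  · calc _ ≤ ∑ v ∈ Zᶜ, D := by
          apply Finset.sum_le_sum
          intro v hv
          exact hD v (Finset.mem_compl.1 hv)
      _ = _ := by rw [Finset.sum_const, nsmul_eq_mul, mul_comm]

open Classical in
lemma graph_main {V : Type} [Fintype V] (G : SimpleGraph V) (α η a' : ℝ) (n J : ℕ)
    (hα : 0 < α) (hα1 : 2 * α ^ 2 < 1) (h2 : 2 * α ^ 2 ≤ η) (hn : Fintype.card V = n) (hJ : 1 ≤ J)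
    (ha' : α ^ 2 < a')
    (hinv : ∀ j : ℕ, 1 ≤ j → j < J → 1 - 2 * α ^ 2 < (1 + α) ^ (j - 1) * (1 - a' * j))
    (hterm : 1 - 2 * α ^ 2 < (1 + α) ^ (J - 1) * (2 * α ^ 2 - α ^ 2 * a' * J))
    (hdeg : ∀ v : V, η * n ≤ ((G.neighborSet v).ncard : ℝ))
    (hrob : ∀ X : Set V, α * X.ncard * Xᶜ.ncard ≤ (eBetween G X Xᶜ : ℝ))
    (x y : V) :
    ∃ t, 1 ≤ t ∧ t ≤ J ∧
      (α ^ 2 * a' * n) ^ t ≤ (((G.adjMatrix ℕ ^ (t + 1)) x y : ℕ) : ℝ) := by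
  by_contra hcon
  have hn0 : (0 : ℝ) < n := by
    have : 0 < Fintype.card V := Fintype.card_pos_iff.2 ⟨x⟩
    rw [hn] at this
    exact_mod_cast this
  have ha0 : 0 < α ^ 2 := by positivity
  have ha'0 : 0 < a' := ha0.trans ha'
  have hαlt : α < 1 := by nlinarith
  set N : ℝ := α ^ 2 * a' * n with hN
  have hN0 : 0 ≤ N := by positivity
  set X : ℕ → Finset V := fun j => Finset.univ.filter fun u => ∃ t, 1 ≤ t ∧ t ≤ j ∧
      N ^ (t - 1) ≤ (((G.adjMatrix ℕ ^ t) x u : ℕ) : ℝ) with hX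
  have hdeg' : ∀ v : V, 2 * α ^ 2 * n ≤ ((G.neighborFinset v).card : ℝ) := by
    intro v
    have h := hdeg v
    rw [← SimpleGraph.coe_neighborFinset, Set.ncard_coe_finset] at h
    exact le_trans (by gcongr) h
  have hcompl : ∀ S : Finset V, (S.card : ℝ) + Sᶜ.card = n := by
    intro S
    rw [← hn]
    exact_mod_cast Finset.card_add_card_compl S
  have hpig : ∀ (v : V) (j : ℕ), 1 ≤ j →
      (j * N ≤ (((X j).filter fun u => G.Adj u v).card : ℝ)) →
      ∃ t, 1 ≤ t ∧ t ≤ j ∧ N ^ t ≤ (((G.adjMatrix ℕ ^ (t + 1)) x v : ℕ) : ℝ) := by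
    intro v j hj h
    apply pigeon G x v N hN0 j hj
    simp only [hX, Finset.filter_filter] at h
    exact h
  have hbound : ∀ j : ℕ, 1 ≤ j → j ≤ J →
      (1 + α) ^ (j - 1) * ((X j)ᶜ.card : ℝ) ≤ (1 - 2 * α ^ 2) * n := by
    intro j hj
    induction j, hj using Nat.le_induction with
    | base =>
      intro _
      have hsub : G.neighborFinset x ⊆ X 1 := by
        intro u hu
        simp only [hX, Finset.mem_filter, Finset.mem_univ, true_and]
        refine ⟨1, le_rfl, le_rfl, ?_⟩
        rw [SimpleGraph.mem_neighborFinset] at hu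
        simp [hu]
      have h1 : ((G.neighborFinset x).card : ℝ) ≤ (X 1).card := by
        exact_mod_cast Finset.card_le_card hsub
      have h3 := hdeg' x
      have h4 := hcompl (X 1)
      simp only [Nat.sub_self, pow_zero, one_mul]
      linarith
    | succ j hj ih =>
      intro hjJ
      have ih' := ih (by omega)
      have hi := hinv j hj (by omega)
      have hp : 0 < (1 + α) ^ (j - 1) := by positivity
      have hc := hcompl (X j)
      have hlarge : a' * j * n < (X j).card := by
        have h5 : (1 + α) ^ (j - 1) * ((X j)ᶜ.card : ℝ) < (1 + α) ^ (j - 1) * ((1 - a' * j) * n) := by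
          refine ih'.trans_lt ?_
          rw [← mul_assoc]
          exact mul_lt_mul_of_pos_right hi hn0
        have h6 := lt_of_mul_lt_mul_left h5 hp.le
        linarith
      have hXZ : X j ⊆ X (j + 1) := by
        intro u hu
        simp only [hX, Finset.mem_filter, Finset.mem_univ, true_and] at hu ⊢
        obtain ⟨t, h1, h2, h3⟩ := hu
        exact ⟨t, h1, by omega, h3⟩
      have hedge := edge_step G (X j) (X (j + 1)) hXZ (j * N) (by
        intro v hv
        by_contra hlt
        push Not at hlt
        obtain ⟨t, h1, h2, h3⟩ := hpig v j hj hlt.le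
        apply hv
        simp only [hX, Finset.mem_filter, Finset.mem_univ, true_and]
        exact ⟨t + 1, by omega, by omega, by simpa using h3⟩)
      have hr := hrob (X j : Set V)
      rw [← Finset.coe_compl, Set.ncard_coe_finset, Set.ncard_coe_finset, Finset.coe_compl] at hr
      have hrr := hr.trans hedge
      have hXpos : (0 : ℝ) < (X j).card := lt_of_le_of_lt (by positivity) hlarge
      have hDle : j * N ≤ α ^ 2 * (X j).card := by
        rw [hN]; nlinarith
      set A : ℝ := ((X j).card : ℝ)
      set B : ℝ := ((X j)ᶜ.card : ℝ)
      set C : ℝ := ((X (j + 1))ᶜ.card : ℝ) with hC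
      have hC0 : 0 ≤ C := by positivity
      have h7 : A * ((1 - α) * ((1 + α) * C)) ≤ A * ((1 - α) * B) := by
        nlinarith [mul_le_mul_of_nonneg_right hDle hC0]
      have h8 := le_of_mul_le_mul_left (le_of_mul_le_mul_left h7 hXpos) (by linarith : 0 < 1 - α)
      obtain ⟨k, rfl⟩ : ∃ k, j = k + 1 := ⟨j - 1, by omega⟩
      simp only [Nat.add_sub_cancel] at ih' ⊢
      refine le_trans ?_ ih'
      rw [pow_succ, mul_assoc]
      exact mul_le_mul_of_nonneg_left h8 (by positivity)
  have hfin := hbound J hJ le_rfl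
  have hy : (((X J).filter fun u => G.Adj u y).card : ℝ) < J * N := by
    by_contra hge
    push Not at hge
    exact hcon (hpig y J hJ hge)
  have hdy := hdeg' y
  have hsub : G.neighborFinset y ⊆ ((X J).filter fun u => G.Adj u y) ∪ (X J)ᶜ := by
    intro u hu
    rw [SimpleGraph.mem_neighborFinset] at hu
    by_cases h : u ∈ X J
    · exact Finset.mem_union_left _ (Finset.mem_filter.2 ⟨h, hu.symm⟩)
    · exact Finset.mem_union_right _ (Finset.mem_compl.2 h)
  have hcd : ((G.neighborFinset y).card : ℝ) ≤
      (((X J).filter fun u => G.Adj u y).card : ℝ) + (X J)ᶜ.card := by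
    exact_mod_cast (Finset.card_le_card hsub).trans (Finset.card_union_le _ _)
  have h9 : (2 * α ^ 2 - α ^ 2 * a' * J) * n ≤ (X J)ᶜ.card := by
    rw [hN] at hy; nlinarith
  have hp : 0 < (1 + α) ^ (J - 1) := by positivity
  have h10 := mul_le_mul_of_nonneg_left h9 hp.le
  have h11 := mul_lt_mul_of_pos_right hterm hn0
  linarith

lemma large_n (c b : ℝ) (hb : 0 ≤ b) (hbc : b < c) (J : ℕ) :
    ∃ n₀ : ℕ, ∀ n : ℕ, n₀ ≤ n → ∀ i ∈ Finset.Icc 1 J, ((i : ℝ) + 2) ^ 2 ≤ n * (c ^ i - b ^ i) := by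
  rw [← Filter.eventually_atTop, Filter.eventually_all_finset]
  intro i hi
  have hi1 : i ≠ 0 := by rw [Finset.mem_Icc] at hi; omega
  have hpos : 0 < c ^ i - b ^ i := sub_pos.2 (pow_lt_pow_left₀ hbc hb hi1)
  have := (tendsto_natCast_atTop_atTop (R := ℝ)).atTop_mul_const hpos
  exact this.eventually_ge_atTop _

/-- Connecting Lemma, part (i): let `0 < α, η` with `η ≥ 2α²` and `n`
sufficiently large in terms of `α, η`. If `G` is an `(η, α)`-robust graph on `n`
vertices, then for every pair of distinct vertices `x, y` there is `1 ≤ i ≤ 1/α²`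
such that the number of `x,y`-paths with exactly `i` internal vertices is at least
`(α⁴n)^i`. -/
theorem connecting_lemma_i :
    ∀ α η : ℝ, 0 < α → 0 < η → 2 * α ^ 2 ≤ η →
    ∃ n₀ : ℕ, ∀ n : ℕ, n₀ ≤ n →
    ∀ (V : Type) [Fintype V] (G : SimpleGraph V), Fintype.card V = n →
    (∀ v : V, η * n ≤ ((G.neighborSet v).ncard : ℝ)) →
    (∀ X : Set V, α * X.ncard * Xᶜ.ncard ≤ (eBetween G X Xᶜ : ℝ)) →
    ∀ x y : V, x ≠ y →
      ∃ i : ℕ, 1 ≤ i ∧ (i : ℝ) ≤ 1 / α ^ 2 ∧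
        (α ^ 4 * n) ^ i ≤
          (Nat.card {p : G.Walk x y // p.IsPath ∧ p.length = i + 1} : ℝ) := by
  intro α η hα hη h2
  by_cases ha : 2 * α ^ 2 < 1
  · obtain ⟨J, hJ, hJa, a', ha', hinv, hterm⟩ := num_exists' α hα ha
    have ha0 : 0 < α ^ 2 := by positivity
    obtain ⟨n₀, hn₀⟩ := large_n (α ^ 2 * a') (α ^ 4) (by positivity) (by nlinarith) J
    refine ⟨n₀, ?_⟩
    intro n hn V _ G hcard hdeg hrob x y hxy
    classical
    obtain ⟨i, hi1, hiJ, hW⟩ := graph_main G α η a' n J hα ha h2 hcard hJ ha' hinv hterm hdeg hrob x y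
    refine ⟨i, hi1, ?_, ?_⟩
    · rw [le_div_iff₀ ha0]
      have : (i : ℝ) ≤ J := by exact_mod_cast hiJ
      nlinarith
    · have hs : (((G.adjMatrix ℕ ^ (i + 1)) x y : ℕ) : ℝ) ≤
          (Nat.card {p : G.Walk x y // p.IsPath ∧ p.length = i + 1} : ℝ)
            + ((i : ℝ) + 2) ^ 2 * (n : ℝ) ^ (i - 1) := by
        have := walk_split G x y hxy i
        rw [hcard] at this
        convert (Nat.cast_le (α := ℝ)).2 this using 1
        · congr!
        · push_cast; rfl
      have hl := hn₀ n hn i (Finset.mem_Icc.2 ⟨hi1, hiJ⟩)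
      have hl' := mul_le_mul_of_nonneg_right hl (by positivity : (0 : ℝ) ≤ (n : ℝ) ^ (i - 1))
      have e : (n : ℝ) * ((α ^ 2 * a') ^ i - (α ^ 4) ^ i) * (n : ℝ) ^ (i - 1) =
          (α ^ 2 * a' * n) ^ i - (α ^ 4 * n) ^ i := by
        obtain ⟨k, rfl⟩ : ∃ k, i = k + 1 := ⟨i - 1, by omega⟩
        simp only [Nat.add_sub_cancel, mul_pow, pow_succ]
        ring
      rw [e] at hl'
      have hW' : (α ^ 2 * a' * n) ^ i ≤ (((G.adjMatrix ℕ ^ (i + 1)) x y : ℕ) : ℝ) := by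
        convert hW using 1
      linarith
  · refine ⟨0, ?_⟩
    intro n hn V _ G hcard hdeg hrob x y hxy
    exfalso
    have h := hdeg x
    have hlt : (G.neighborSet x).ncard < n := by
      rw [← hcard, ← Nat.card_eq_fintype_card, ← Set.ncard_univ]
      refine Set.ncard_lt_ncard ?_ Set.finite_univ
      refine ⟨Set.subset_univ _, fun hh => ?_⟩
      exact G.loopless.irrefl x (hh (Set.mem_univ x))
    have hlt' : ((G.neighborSet x).ncard : ℝ) < n := by exact_mod_cast hlt
    push Not at ha
    nlinarith [(Nat.cast_nonneg n : (0 : ℝ) ≤ n)]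
end

section
/- Let ℓ be a positive integer, let 0 < σᵢ ≤ 1 for i ∈ [ℓ], and let σ = min{σ₁, …, σ_ℓ}. For each i let 𝒮ᵢ be the set of i-tuples of distinct elements of [n], let 𝒮 ⊆ ⋃ᵢ 𝒮ᵢ, and let 𝒯 be a finite set with |𝒯| ≤ |𝒮|. There exists n₀ such that for n ≥ n₀ the following holds: if Γ is a bipartite graph between 𝒮 and 𝒯 such that every u ∈ 𝒯 has, for some i ∈ [ℓ], at least σᵢnⁱ neighbors in 𝒮 ∩ 𝒮ᵢ, then there exists a family 𝒜* ⊆ 𝒮 of pairwise disjoint tuples (viewed as sets) with |𝒜* ∩ 𝒮ᵢ| ≤ σn/(4ℓ²) for all i, total size ∑_{A ∈ 𝒜*}|A| ≤ σn, every element of 𝒜* has at least one neighbor in 𝒯, and every u ∈ 𝒯 has at least σ²n/(32ℓ²) neighbors in 𝒜* ∩ 𝒮ᵢ for some i. Consequently, for every ℬ ⊆ 𝒯 with |ℬ| ≤ σ²n/(32ℓ²), the bipartite graph Γ[𝒜*, ℬ] contains a matching saturating ℬ. -/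
open scoped Classical

theorem ga_chernoff {α : Type} [Fintype α] [DecidableEq α] (N : Finset α) (m : ℕ) (t : ℝ) :
    (((Finset.univ : Finset (Fin m → α)).filter
      (fun g => (((Finset.univ : Finset (Fin m)).filter (fun k => g k ∈ N)).card : ℝ) < t)).card : ℝ)
    ≤ (2:ℝ) ^ t * ((Fintype.card α : ℝ) - N.card / 2) ^ m := by
  have h1 : ∑ g : Fin m → α, ∏ k, (if g k ∈ N then (1/2 : ℝ) else 1)
      = ((Fintype.card α : ℝ) - N.card / 2) ^ m := by
    have h := (Finset.prod_univ_sum (fun _ : Fin m => (Finset.univ : Finset α))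
      (fun _ a => (if a ∈ N then (1/2 : ℝ) else 1)))
    rw [Fintype.piFinset_univ] at h
    rw [← h, Finset.prod_const, Finset.card_univ, Fintype.card_fin]
    congr 1
    have : ∀ a : α, (if a ∈ N then (1/2 : ℝ) else 1) = 1 - (if a ∈ N then (1/2 : ℝ) else 0) := by
      intro a; split_ifs <;> norm_num
    simp_rw [this]
    rw [Finset.sum_sub_distrib]
    simp [Finset.sum_ite_mem]
    ring
  rw [← h1, Finset.mul_sum]
  rw [Finset.card_eq_sum_ones, Nat.cast_sum, Finset.sum_filter]
  apply Finset.sum_le_sum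
  intro g _
  have h2 : ∏ k, (if g k ∈ N then (1/2 : ℝ) else 1)
      = (2:ℝ) ^ (-(((Finset.univ : Finset (Fin m)).filter (fun k => g k ∈ N)).card : ℝ)) := by
    rw [Finset.prod_ite, Finset.prod_const, Finset.prod_const_one, mul_one,
      Real.rpow_neg (by norm_num), Real.rpow_natCast, one_div, inv_pow]
  rw [h2, ← Real.rpow_add (by norm_num)]
  split_ifs with hc
  · rw [Nat.cast_one]
    apply Real.one_le_rpow (by norm_num); linarith
  · positivity

theorem ga_fiber {V γ : Type} [Fintype V] [DecidableEq V] [DecidableEq γ] (D : Finset V) (R : Equiv.Perm V → γ)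
    (hR : ∀ p q, R p = R q → ∀ x ∈ D, p x = q x) (B : Finset γ) :
    ((Finset.univ : Finset (Equiv.Perm V)).filter (fun p => R p ∈ B)).card
      ≤ (Fintype.card V - D.card).factorial * B.card := by
  apply Finset.card_le_mul_card_image_of_maps_to (f := R)
  · intro p hp; exact (Finset.mem_filter.1 hp).2
  · intro b _
    set F := ((Finset.univ : Finset (Equiv.Perm V)).filter (fun p => R p ∈ B)).filter
      (fun p => R p = b) with hF
    rcases F.eq_empty_or_nonempty with h | ⟨p0, hp0⟩
    · rw [h]; simp
    have hcard : Fintype.card (Equiv.Perm {x // x ∉ D}) = (Fintype.card V - D.card).factorial := by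
      rw [Fintype.card_perm]; congr 1
      rw [Fintype.card_subtype_compl]; simp
    rw [← hcard, Fintype.card_congr (Equiv.Perm.subtypeEquivSubtypePerm (fun x => x ∉ D)),
      ← Fintype.card_coe]
    have key : ∀ p : F, ∀ x, ¬ (x ∉ D) → (p0⁻¹ * p.1) x = x := by
      intro p x hx
      have h1 : R p.1 = R p0 := ((Finset.mem_filter.1 p.2).2).trans (Finset.mem_filter.1 hp0).2.symm
      rw [Equiv.Perm.mul_apply, hR _ _ h1 x (not_not.1 hx)]; simp
    apply Fintype.card_le_of_injective (fun p : F => (⟨p0⁻¹ * p.1, key p⟩ :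
      {f : Equiv.Perm V // ∀ a, ¬ (a ∉ D) → f a = a}))
    intro p q h
    have := congrArg Subtype.val h
    exact Subtype.ext (mul_left_cancel this)

theorem ga_num (ℓ : ℕ) (hℓ : 1 ≤ ℓ) (s : ℝ) (hs : 0 < s) (hs1 : s ≤ 1) :
    ∃ n₀ : ℕ, ∀ n : ℕ, n₀ ≤ n → 1 ≤ n ∧ ∀ i ∈ Finset.Icc 1 ℓ, ∀ m : ℕ,
      m = ⌊s * n / (4 * ℓ ^ 2)⌋₊ →
      ((ℓ : ℝ) * n ^ ℓ) * ((2:ℝ) ^ (s ^ 2 * n / (32 * ℓ ^ 2)) * ((n:ℝ) ^ i * (1 - s / 2)) ^ m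
        * ((n - i * m).factorial : ℝ)) < (n.factorial : ℝ) := by
  have hL : (1:ℝ) ≤ ℓ := by exact_mod_cast hℓ
  have hL0 : (0:ℝ) < ℓ := by linarith
  set c : ℝ := s ^ 2 / (64 * ℓ ^ 2) with hc
  have hc0 : 0 < c := by positivity
  have hlim : Filter.Tendsto (fun n : ℕ => (n:ℝ) ^ ℓ * Real.exp (-c * n)) Filter.atTop (nhds 0) := by
    have h := (Real.tendsto_pow_mul_exp_neg_atTop_nhds_zero ℓ)
    have h2 : Filter.Tendsto (fun n : ℕ => c * (n:ℝ)) Filter.atTop Filter.atTop :=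
      tendsto_natCast_atTop_atTop.const_mul_atTop hc0
    have h3 := (h.comp h2).const_mul ((c ^ ℓ)⁻¹)
    rw [mul_zero] at h3
    refine h3.congr ?_
    intro n
    simp only [Function.comp]
    rw [mul_pow, neg_mul]
    field_simp
  have hev := hlim.eventually (gt_mem_nhds (show (0:ℝ) < (ℓ * Real.exp (1/2))⁻¹ by positivity))
  obtain ⟨n₁, hn₁⟩ := Filter.eventually_atTop.1 hev
  refine ⟨max n₁ 1, fun n hn => ⟨le_trans (le_max_right _ _) hn, ?_⟩⟩
  have hn1 := hn₁ n (le_trans (le_max_left _ _) hn)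
  have hnn : 1 ≤ n := le_trans (le_max_right _ _) hn
  have hnR : (1:ℝ) ≤ n := by exact_mod_cast hnn
  have hn0 : (0:ℝ) < n := by linarith
  intro i hi m hm
  have hi1 := (Finset.mem_Icc.1 hi).1
  have hi2 : (i:ℝ) ≤ ℓ := by exact_mod_cast (Finset.mem_Icc.1 hi).2
  have hm1 : (m:ℝ) ≤ s * n / (4 * ℓ ^ 2) := by rw [hm]; exact Nat.floor_le (by positivity)
  have hm2 : s * n / (4 * ℓ ^ 2) < m + 1 := by rw [hm]; exact Nat.lt_floor_add_one _
  set q := i * m with hq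
  have hqL : (q:ℝ) ≤ s * n / (4 * ℓ) := by
    rw [hq]; push_cast
    calc (i:ℝ) * m ≤ ℓ * (s * n / (4 * ℓ ^ 2)) := by gcongr
      _ = _ := by field_simp
  have hq4 : (q:ℝ) ≤ n / 4 := by
    refine hqL.trans ?_
    rw [div_le_div_iff₀ (by positivity) (by positivity)]
    nlinarith [mul_nonneg hn0.le (sub_nonneg.2 (hs1.trans hL))]
  have hqn : q ≤ n := by
    have : (q:ℝ) ≤ n := by linarith
    exact_mod_cast this
  have hfac : (n.factorial : ℝ) = (n.descFactorial q : ℝ) * ((n - q).factorial : ℝ) := by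
    rw [← Nat.factorial_mul_descFactorial hqn]; push_cast; ring
  have hdesc : ((n:ℝ) - q) ^ q ≤ (n.descFactorial q : ℝ) := by
    have h := Nat.pow_sub_le_descFactorial n q
    have h' : (((n + 1 - q : ℕ) : ℝ)) ^ q ≤ (n.descFactorial q : ℝ) := by exact_mod_cast h
    refine le_trans (pow_le_pow_left₀ (by linarith) ?_ q) h'
    rw [Nat.cast_sub (by omega)]; push_cast; linarith
  have hbase : (n:ℝ) * Real.exp (-(4 * q / (3 * n))) ≤ n - q := by
    set x : ℝ := q / n with hx
    have hx0 : 0 ≤ x := by positivity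
    have hx4 : x ≤ 1/4 := by rw [hx, div_le_iff₀ hn0]; linarith
    have e1 : 4 * (q:ℝ) / (3 * n) = 4 * x / 3 := by rw [hx]; field_simp
    have e2 : (n:ℝ) - q = n * (1 - x) := by rw [hx]; field_simp
    rw [e1, e2]
    apply mul_le_mul_of_nonneg_left _ hn0.le
    rw [Real.exp_neg, inv_le_comm₀ (Real.exp_pos _) (by linarith)]
    refine le_trans ?_ (Real.add_one_le_exp _)
    rw [inv_le_iff_one_le_mul₀ (by linarith)]
    nlinarith
  have hexp2 : (n:ℝ) ^ q * Real.exp (-(s ^ 2 * n / (12 * ℓ ^ 2))) ≤ (n.descFactorial q : ℝ) := by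
    refine le_trans ?_ hdesc
    refine le_trans ?_ (pow_le_pow_left₀ (by positivity) hbase q)
    rw [mul_pow, ← Real.exp_nat_mul]
    gcongr
    have : (q:ℝ) * (4 * q / (3 * n)) ≤ (s * n / (4 * ℓ)) * (4 * (s * n / (4 * ℓ)) / (3 * n)) := by
      gcongr
    have e : (s * n / (4 * ℓ)) * (4 * (s * n / (4 * ℓ)) / (3 * n)) = s ^ 2 * n / (12 * ℓ ^ 2) := by
      field_simp; norm_num
    linarith
  have h2pow : (2:ℝ) ^ (s ^ 2 * n / (32 * ℓ ^ 2)) ≤ Real.exp (0.7 * (s ^ 2 * n / (32 * ℓ ^ 2))) := by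
    rw [Real.rpow_def_of_pos (by norm_num)]
    gcongr
    linarith [Real.log_two_lt_d9]
  have hsm : (1 - s / 2) ^ m ≤ Real.exp (1/2 - s ^ 2 * n / (8 * ℓ ^ 2)) := by
    have : 1 - s / 2 ≤ Real.exp (-(s/2)) := by linarith [Real.add_one_le_exp (-(s/2))]
    refine (pow_le_pow_left₀ (by linarith) this m).trans ?_
    rw [← Real.exp_nat_mul]
    gcongr
    have : s * (s * n / (4 * ℓ ^ 2)) ≤ s * (m + 1) := by gcongr
    have e : s * (s * n / (4 * ℓ ^ 2)) = 2 * (s ^ 2 * n / (8 * ℓ ^ 2)) := by field_simp; norm_num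
    linarith
  rw [hfac, ← mul_assoc]
  apply mul_lt_mul_of_pos_right _ (by positivity)
  refine lt_of_lt_of_le ?_ hexp2
  have hX : 0 < s ^ 2 * n / ℓ ^ 2 := by positivity
  set X := s ^ 2 * n / ℓ ^ 2 with hXd
  have e32 : s ^ 2 * n / (32 * ℓ ^ 2) = X / 32 := by rw [hXd]; field_simp
  have e12 : s ^ 2 * n / (12 * ℓ ^ 2) = X / 12 := by rw [hXd]; field_simp
  have e8 : s ^ 2 * n / (8 * ℓ ^ 2) = X / 8 := by rw [hXd]; field_simp
  have ec : -c * n = - (X / 64) := by rw [hXd, hc]; field_simp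
  rw [e32] at h2pow
  rw [e8] at hsm
  rw [e32, e12, mul_pow, ← pow_mul, ← hq]
  rw [ec] at hn1
  calc (ℓ:ℝ) * n ^ ℓ * (2 ^ (X / 32) * (n ^ q * (1 - s / 2) ^ m))
      ≤ ℓ * n ^ ℓ * (Real.exp (0.7 * (X/32)) * (n ^ q * Real.exp (1/2 - X/8))) := by
        gcongr
        exact mul_nonneg (by positivity) (pow_nonneg (by linarith) _)
    _ = n ^ q * (ℓ * n ^ ℓ * (Real.exp (0.7 * (X/32)) * Real.exp (1/2 - X/8))) := by ring
    _ < n ^ q * Real.exp (-(X/12)) := by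
      apply mul_lt_mul_of_pos_left _ (by positivity)
      rw [← Real.exp_add]
      have : (n:ℝ) ^ ℓ * Real.exp (-(X/64)) * (ℓ * Real.exp (1/2)) < 1 := by
        rwa [← lt_div_iff₀ (by positivity), one_div]
      calc (ℓ:ℝ) * n ^ ℓ * Real.exp (0.7 * (X/32) + (1/2 - X/8))
          ≤ ℓ * n ^ ℓ * Real.exp (-(X/64) + 1/2 + (-(X/12))) := by
            exact mul_le_mul_of_nonneg_left (Real.exp_le_exp.2 (by linarith)) (by positivity)
        _ = ((n:ℝ) ^ ℓ * Real.exp (-(X/64)) * (ℓ * Real.exp (1/2))) * Real.exp (-(X/12)) := by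
            rw [Real.exp_add, Real.exp_add]; ring
        _ < 1 * Real.exp (-(X/12)) := by
            apply mul_lt_mul_of_pos_right this (Real.exp_pos _)
        _ = _ := one_mul _

set_option maxHeartbeats 1000000 in
/-- general absorbing proposition: tuples of distinct elements of `[n]`
are modeled as sigma-pairs `⟨i, f⟩` with `f : Fin i ↪ Fin n`.  Given a bipartite graph
`Adj` between a family `𝒮` of such tuples (of lengths in `[ℓ]`) and a finite set `𝒯`
with `|𝒯| ≤ |𝒮|`, in which every `u ∈ 𝒯` has, for some `i ∈ [ℓ]`, at least `σᵢnⁱ`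
neighbors among the `i`-tuples of `𝒮`, there is (for `n` sufficiently large) a family
`𝒜* ⊆ 𝒮` of pairwise disjoint tuples with `|𝒜* ∩ 𝒮ᵢ| ≤ σn/(4ℓ²)`, total size at most
`σn`, every member of `𝒜*` having a neighbor in `𝒯`, and every `u ∈ 𝒯` having at least
`σ²n/(32ℓ²)` neighbors in `𝒜* ∩ 𝒮ᵢ` for some `i`; consequently every `ℬ ⊆ 𝒯` with
`|ℬ| ≤ σ²n/(32ℓ²)` is saturated by a matching into `𝒜*`. -/
theorem general_absorbing (ℓ : ℕ) (hℓ : 1 ≤ ℓ) (σ : ℕ → ℝ)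
    (hσ : ∀ i ∈ Finset.Icc 1 ℓ, 0 < σ i ∧ σ i ≤ 1)
    (σm : ℝ) (hσm : ∀ i ∈ Finset.Icc 1 ℓ, σm ≤ σ i)
    (hσm' : ∃ i ∈ Finset.Icc 1 ℓ, σm = σ i) :
    ∃ n₀ : ℕ, ∀ n : ℕ, n₀ ≤ n →
    ∀ (T : Type) [Fintype T],
    ∀ (𝒮 : Set (Σ i : ℕ, Fin i ↪ Fin n)) (Adj : (Σ i : ℕ, Fin i ↪ Fin n) → T → Prop),
    (∀ s ∈ 𝒮, 1 ≤ s.1 ∧ s.1 ≤ ℓ) →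
    Fintype.card T ≤ 𝒮.ncard →
    (∀ u : T, ∃ i ∈ Finset.Icc 1 ℓ,
      σ i * (n : ℝ) ^ i ≤ ({s ∈ 𝒮 | s.1 = i ∧ Adj s u}.ncard : ℝ)) →
    ∃ 𝒜 : Finset (Σ i : ℕ, Fin i ↪ Fin n),
      ↑𝒜 ⊆ 𝒮 ∧
      (∀ a ∈ 𝒜, ∀ b ∈ 𝒜, a ≠ b → Disjoint (Set.range a.2) (Set.range b.2)) ∧
      (∀ i ∈ Finset.Icc 1 ℓ,
        (((𝒜.filter (fun a => a.1 = i)).card : ℝ)) ≤ σm * n / (4 * ℓ ^ 2)) ∧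
      ((∑ a ∈ 𝒜, (a.1 : ℝ)) ≤ σm * n) ∧
      (∀ a ∈ 𝒜, ∃ u : T, Adj a u) ∧
      (∀ u : T, ∃ i ∈ Finset.Icc 1 ℓ,
        σm ^ 2 * n / (32 * ℓ ^ 2) ≤
          (((𝒜.filter (fun a => a.1 = i ∧ Adj a u)).card : ℝ))) ∧
      ∀ ℬ : Finset T, ((ℬ.card : ℝ) ≤ σm ^ 2 * n / (32 * ℓ ^ 2)) →
        ∃ f : T → (Σ i : ℕ, Fin i ↪ Fin n),
          Set.InjOn f ↑ℬ ∧ ∀ b ∈ ℬ, f b ∈ 𝒜 ∧ Adj (f b) b := by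
  obtain ⟨i₀, hi₀, hi₀'⟩ := hσm'
  have hs0 : 0 < σm := by rw [hi₀']; exact (hσ i₀ hi₀).1
  have hs1 : σm ≤ 1 := by rw [hi₀']; exact (hσ i₀ hi₀).2
  obtain ⟨n₀, hn₀⟩ := ga_num ℓ hℓ σm hs0 hs1
  refine ⟨n₀, fun n hn T _ 𝒮 Adj h𝒮 hT hdeg => ?_⟩
  obtain ⟨hn1, hnum⟩ := hn₀ n hn
  have hnR : (1:ℝ) ≤ n := by exact_mod_cast hn1
  have hL : (1:ℝ) ≤ ℓ := by exact_mod_cast hℓ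
  set m : ℕ := ⌊σm * n / (4 * ℓ ^ 2)⌋₊ with hm
  have hm1 : (m:ℝ) ≤ σm * n / (4 * ℓ ^ 2) := by rw [hm]; exact Nat.floor_le (by positivity)
  have hlm : (ℓ:ℝ) ^ 2 * m ≤ σm * n := by
    calc (ℓ:ℝ) ^ 2 * m ≤ ℓ ^ 2 * (σm * n / (4 * ℓ ^ 2)) := by gcongr
      _ = σm * n / 4 := by field_simp
      _ ≤ σm * n := by linarith [mul_pos hs0 (lt_of_lt_of_le one_pos hnR)]
  have hcardP : Fintype.card (Fin ℓ × Fin m × Fin ℓ) ≤ Fintype.card (Fin n) := by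
    simp only [Fintype.card_prod, Fintype.card_fin]
    have : (ℓ:ℝ) ^ 2 * m ≤ n := hlm.trans (by nlinarith)
    have h2 : ℓ ^ 2 * m ≤ n := by exact_mod_cast this
    calc ℓ * (m * ℓ) = ℓ ^ 2 * m := by ring
      _ ≤ n := h2
  obtain ⟨e⟩ := Function.Embedding.nonempty_of_card_le hcardP
  let blk : ∀ (i : Fin ℓ), Fin m → (Fin (i.1 + 1) ↪ Fin n) := fun i k =>
    ⟨fun j => e (i, k, Fin.castLE i.2 j), fun a b h => by
      have := e.injective h
      simp only [Prod.mk.injEq, true_and] at this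
      exact Fin.castLE_injective _ this⟩
  let tup : Equiv.Perm (Fin n) → Fin ℓ × Fin m → (Σ i : ℕ, Fin i ↪ Fin n) := fun p x =>
    ⟨x.1.1 + 1, (blk x.1 x.2).trans p.toEmbedding⟩
  have htup_disj : ∀ p x y, x ≠ y → Disjoint (Set.range (tup p x).2) (Set.range (tup p y).2) := by
    intro p x y hxy
    rw [Set.disjoint_left]
    rintro v ⟨a, ha⟩ ⟨b, hb⟩
    apply hxy
    have h1 : p (e (x.1, x.2, Fin.castLE x.1.2 a)) = p (e (y.1, y.2, Fin.castLE y.1.2 b)) :=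
      ha.trans hb.symm
    have h2 := e.injective (p.injective h1)
    simp only [Prod.mk.injEq] at h2
    exact Prod.ext h2.1 h2.2.1
  have htup_inj : ∀ p, Function.Injective (tup p) := by
    intro p x y h
    by_contra hxy
    have h1 := htup_disj p x y hxy
    rw [← h, disjoint_self] at h1
    have h2 : (tup p x).2 ⟨0, Nat.succ_pos _⟩ ∈ Set.range (tup p x).2 := ⟨_, rfl⟩
    rw [h1] at h2
    exact h2
  have hdeg' : ∀ u : T, ∃ i : Fin ℓ, σm * (n:ℝ) ^ (i.1 + 1) ≤
      (((Finset.univ : Finset (Fin (i.1+1) ↪ Fin n)).filter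
        (fun f => (⟨i.1+1, f⟩ : Σ i : ℕ, Fin i ↪ Fin n) ∈ 𝒮 ∧ Adj ⟨i.1+1, f⟩ u)).card : ℝ) := by
    intro u
    obtain ⟨i, hi, h⟩ := hdeg u
    have hi1 := (Finset.mem_Icc.1 hi).1
    have hi2 := (Finset.mem_Icc.1 hi).2
    obtain ⟨j, rfl⟩ : ∃ j, i = j + 1 := ⟨i - 1, by omega⟩
    refine ⟨⟨j, hi2⟩, ?_⟩
    refine le_trans (mul_le_mul_of_nonneg_right (hσm _ hi) (by positivity)) (h.trans ?_)
    have hset : {s ∈ 𝒮 | s.1 = j + 1 ∧ Adj s u} ⊆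
        (((Finset.univ : Finset (Fin (j+1) ↪ Fin n)).filter
        (fun f => (⟨j+1, f⟩ : Σ i : ℕ, Fin i ↪ Fin n) ∈ 𝒮 ∧ Adj ⟨j+1, f⟩ u)).image
          (fun f => (⟨j+1, f⟩ : Σ i : ℕ, Fin i ↪ Fin n)) : Finset _) := by
      rintro ⟨a, f⟩ ⟨h1, h2, h3⟩
      dsimp only at h2
      subst h2
      simp only [Finset.coe_image, Set.mem_image, Finset.mem_coe, Finset.mem_filter,
        Finset.mem_univ, true_and]
      exact ⟨f, ⟨h1, h3⟩, rfl⟩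
    have h4 := Set.ncard_le_ncard hset (Finset.finite_toSet _)
    rw [Set.ncard_coe_finset] at h4
    exact_mod_cast h4.trans Finset.card_image_le
  choose idx hidx using hdeg'
  have hTcard : (Fintype.card T : ℝ) ≤ ℓ * (n:ℝ) ^ ℓ := by
    have hsub : 𝒮 ⊆ (((Finset.Icc 1 ℓ).sigma (fun i => (Finset.univ : Finset (Fin i ↪ Fin n)))
        : Finset _) : Set (Σ i : ℕ, Fin i ↪ Fin n)) := by
      intro s hs
      simp only [Finset.mem_coe, Finset.mem_sigma, Finset.mem_Icc, Finset.mem_univ, and_true]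
      exact h𝒮 s hs
    have h1 := Set.ncard_le_ncard hsub (Finset.finite_toSet _)
    rw [Set.ncard_coe_finset, Finset.card_sigma] at h1
    have h2 : ∑ i ∈ Finset.Icc 1 ℓ, (Finset.univ : Finset (Fin i ↪ Fin n)).card
        ≤ ∑ i ∈ Finset.Icc 1 ℓ, n ^ ℓ := by
      apply Finset.sum_le_sum
      intro i hi
      rw [Finset.card_univ, Fintype.card_embedding_eq, Fintype.card_fin, Fintype.card_fin]
      exact (Nat.descFactorial_le_pow _ _).trans
        (Nat.pow_le_pow_right hn1 (Finset.mem_Icc.1 hi).2)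
    rw [Finset.sum_const, Nat.card_Icc, smul_eq_mul, Nat.add_sub_cancel] at h2
    exact_mod_cast hT.trans (h1.trans h2)
  set t : ℝ := σm ^ 2 * n / (32 * ℓ ^ 2) with ht
  let cnt : Equiv.Perm (Fin n) → T → ℕ := fun p u =>
    ((Finset.univ : Finset (Fin m)).filter (fun k => tup p (idx u, k) ∈ 𝒮 ∧
      Adj (tup p (idx u, k)) u)).card
  let bad : T → Finset (Equiv.Perm (Fin n)) := fun u =>
    Finset.univ.filter (fun p => (cnt p u : ℝ) < t)
  have hbad : ∀ u, ((ℓ : ℝ) * n ^ ℓ) * ((bad u).card : ℝ) < (n.factorial : ℝ) := by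
    intro u
    set i := idx u with hi
    set N := ((Finset.univ : Finset (Fin (i.1+1) ↪ Fin n)).filter
        (fun f => (⟨i.1+1, f⟩ : Σ i : ℕ, Fin i ↪ Fin n) ∈ 𝒮 ∧ Adj ⟨i.1+1, f⟩ u)) with hN
    have hch := ga_chernoff N m t
    set B := ((Finset.univ : Finset (Fin m → (Fin (i.1+1) ↪ Fin n))).filter
      (fun g => (((Finset.univ : Finset (Fin m)).filter (fun k => g k ∈ N)).card : ℝ) < t)) with hB
    let R : Equiv.Perm (Fin n) → (Fin m → (Fin (i.1+1) ↪ Fin n)) := fun p k =>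
      (blk i k).trans p.toEmbedding
    let D : Finset (Fin n) := (Finset.univ : Finset (Fin m × Fin (i.1+1))).image
      (fun x => blk i x.1 x.2)
    have hD : D.card = (i.1 + 1) * m := by
      rw [Finset.card_image_of_injective, Finset.card_univ, Fintype.card_prod, Fintype.card_fin,
        Fintype.card_fin, mul_comm]
      intro x y h
      have h2 := e.injective h
      simp only [Prod.mk.injEq, true_and] at h2
      exact Prod.ext h2.1 (Fin.castLE_injective _ h2.2)
    have hfib := ga_fiber D R (by
      intro p q h x hx
      obtain ⟨y, _, rfl⟩ := Finset.mem_image.1 hx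
      have := DFunLike.congr_fun (congrFun h y.1) y.2
      exact this) B
    rw [hD, Fintype.card_fin] at hfib
    have hbB : bad u = Finset.univ.filter (fun p => R p ∈ B) := by
      ext p
      simp only [bad, cnt, hB, hN, Finset.mem_filter, Finset.mem_univ, true_and]
      exact Iff.rfl
    rw [hbB]
    have hα : (Fintype.card (Fin (i.1+1) ↪ Fin n) : ℝ) ≤ (n:ℝ) ^ (i.1+1) := by
      rw [Fintype.card_embedding_eq, Fintype.card_fin, Fintype.card_fin]
      exact_mod_cast Nat.descFactorial_le_pow _ _
    have hNα : (N.card : ℝ) ≤ Fintype.card (Fin (i.1+1) ↪ Fin n) := by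
      exact_mod_cast Finset.card_le_univ N
    have hNd : σm * (n:ℝ) ^ (i.1 + 1) ≤ N.card := hidx u
    have hN0 : (0:ℝ) ≤ N.card := by positivity
    have hB2 : (B.card : ℝ) ≤ (2:ℝ) ^ t * ((n:ℝ) ^ (i.1+1) * (1 - σm / 2)) ^ m := by
      refine hch.trans ?_
      apply mul_le_mul_of_nonneg_left _ (by positivity)
      apply pow_le_pow_left₀
      · linarith
      · linarith
    refine lt_of_le_of_lt ?_ (hnum (i.1+1) (Finset.mem_Icc.2 ⟨by omega, i.2⟩) m rfl)
    apply mul_le_mul_of_nonneg_left _ (by positivity)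
    calc ((Finset.univ.filter (fun p => R p ∈ B)).card : ℝ)
        ≤ ((n - (i.1+1) * m).factorial : ℝ) * B.card := by exact_mod_cast hfib
      _ ≤ ((n - (i.1+1) * m).factorial : ℝ) *
          ((2:ℝ) ^ t * ((n:ℝ) ^ (i.1+1) * (1 - σm / 2)) ^ m) := by gcongr
      _ = _ := by ring
  have hgood : ∃ p, ∀ u, t ≤ cnt p u := by
    by_contra hcon
    push Not at hcon
    have hcov : (Finset.univ : Finset (Equiv.Perm (Fin n))) ⊆ Finset.univ.biUnion bad := by
      intro p _
      obtain ⟨u, hu⟩ := hcon p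
      exact Finset.mem_biUnion.2 ⟨u, Finset.mem_univ _, Finset.mem_filter.2 ⟨Finset.mem_univ _, hu⟩⟩
    have h1 := (Finset.card_le_card hcov).trans Finset.card_biUnion_le
    rw [Finset.card_univ, Fintype.card_perm, Fintype.card_fin] at h1
    have h1' : (n.factorial : ℝ) ≤ ∑ u, ((bad u).card : ℝ) := by exact_mod_cast h1
    have hpos : (0:ℝ) < (ℓ : ℝ) * n ^ ℓ := by positivity
    have hfp : (0:ℝ) < n.factorial := by positivity
    obtain ⟨u₀, -⟩ := hcon 1
    have h2 : ∑ u, ((bad u).card : ℝ) < ∑ _u : T, (n.factorial : ℝ) / ((ℓ : ℝ) * n ^ ℓ) := by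
      apply Finset.sum_lt_sum_of_nonempty ⟨u₀, Finset.mem_univ _⟩
      intro u _
      rw [lt_div_iff₀ hpos, mul_comm]; exact hbad u
    rw [Finset.sum_const, Finset.card_univ, nsmul_eq_mul] at h2
    have h3 : (Fintype.card T : ℝ) * ((n.factorial : ℝ) / ((ℓ : ℝ) * n ^ ℓ)) ≤ n.factorial := by
      calc (Fintype.card T : ℝ) * ((n.factorial : ℝ) / ((ℓ : ℝ) * n ^ ℓ))
          ≤ ((ℓ : ℝ) * n ^ ℓ) * ((n.factorial : ℝ) / ((ℓ : ℝ) * n ^ ℓ)) := by gcongr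
        _ = _ := by field_simp
    linarith
  obtain ⟨p, hp⟩ := hgood
  set 𝒜 : Finset (Σ i : ℕ, Fin i ↪ Fin n) :=
    ((Finset.univ : Finset (Fin ℓ × Fin m)).image (tup p)).filter
      (fun a => a ∈ 𝒮 ∧ ∃ u, Adj a u) with h𝒜
  have hmem : ∀ a, a ∈ 𝒜 ↔ (∃ x, tup p x = a) ∧ a ∈ 𝒮 ∧ ∃ u, Adj a u := by
    intro a; simp only [h𝒜, Finset.mem_filter, Finset.mem_image, Finset.mem_univ, true_and]
  have hdegA : ∀ u : T, ∃ i ∈ Finset.Icc 1 ℓ,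
        t ≤ (((𝒜.filter (fun a => a.1 = i ∧ Adj a u)).card : ℝ)) := by
    intro u
    refine ⟨(idx u).1 + 1, Finset.mem_Icc.2 ⟨by omega, (idx u).2⟩, (hp u).trans ?_⟩
    have : cnt p u ≤ (𝒜.filter (fun a => a.1 = (idx u).1 + 1 ∧ Adj a u)).card := by
      apply Finset.card_le_card_of_injOn (fun k => tup p (idx u, k))
      · intro k hk
        have hk' := (Finset.mem_filter.1 hk).2
        exact Finset.mem_filter.2 ⟨(hmem _).2 ⟨⟨_, rfl⟩, hk'.1, u, hk'.2⟩, rfl, hk'.2⟩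
      · intro a _ b _ hab
        have := htup_inj p hab
        simpa using this
    exact_mod_cast this
  refine ⟨𝒜, ?_, ?_, ?_, ?_, ?_, hdegA, ?_⟩
  · intro a ha
    exact ((hmem a).1 ha).2.1
  · intro a ha b hb hab
    obtain ⟨⟨x, rfl⟩, -⟩ := (hmem a).1 ha
    obtain ⟨⟨y, rfl⟩, -⟩ := (hmem b).1 hb
    exact htup_disj p x y (fun h => hab (by rw [h]))
  · intro i hi
    refine le_trans ?_ hm1
    have hi1 := (Finset.mem_Icc.1 hi).1
    have hi2 := (Finset.mem_Icc.1 hi).2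
    have hsub : 𝒜.filter (fun a => a.1 = i) ⊆
        (Finset.univ : Finset (Fin m)).image (fun k => tup p (⟨i - 1, by omega⟩, k)) := by
      intro a ha
      obtain ⟨ha1, ha2⟩ := Finset.mem_filter.1 ha
      obtain ⟨⟨x, rfl⟩, -⟩ := (hmem a).1 ha1
      refine Finset.mem_image.2 ⟨x.2, Finset.mem_univ _, ?_⟩
      congr 1
      refine Prod.ext (Fin.ext ?_) rfl
      have : x.1.1 + 1 = i := ha2
      simp only; omega
    have h1 := (Finset.card_le_card hsub).trans Finset.card_image_le
    rw [Finset.card_univ, Fintype.card_fin] at h1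
    exact_mod_cast h1
  · refine le_trans ?_ hlm
    calc (∑ a ∈ 𝒜, (a.1 : ℝ)) ≤ ∑ a ∈ (Finset.univ : Finset (Fin ℓ × Fin m)).image (tup p), (a.1:ℝ) :=
          Finset.sum_le_sum_of_subset_of_nonneg (Finset.filter_subset _ _)
            (fun _ _ _ => by positivity)
      _ = ∑ x : Fin ℓ × Fin m, ((tup p x).1 : ℝ) := Finset.sum_image (fun a _ b _ h => htup_inj p h)
      _ ≤ ∑ x : Fin ℓ × Fin m, (ℓ:ℝ) := by
          apply Finset.sum_le_sum
          intro x _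
          have : (tup p x).1 ≤ ℓ := x.1.2
          exact_mod_cast this
      _ = _ := by
          simp only [Finset.sum_const, Finset.card_univ, Fintype.card_prod, Fintype.card_fin,
            nsmul_eq_mul, Nat.cast_mul]
          ring
  · intro a ha
    exact ((hmem a).1 ha).2.2
  · intro ℬ hℬ
    have hhall : ∀ s : Finset ℬ, s.card ≤ (s.biUnion (fun b => 𝒜.filter (fun a => Adj a b.1))).card := by
      intro s
      rcases s.eq_empty_or_nonempty with rfl | ⟨b, hb⟩
      · simp
      obtain ⟨i, -, hi⟩ := hdegA b.1
      have h1 : s.card ≤ ℬ.card := by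
        have := Finset.card_le_univ s
        rwa [Fintype.card_coe] at this
      have h2 : ℬ.card ≤ (𝒜.filter (fun a => a.1 = i ∧ Adj a b.1)).card := by
        exact_mod_cast hℬ.trans hi
      refine h1.trans (h2.trans (Finset.card_le_card ?_))
      intro a ha
      obtain ⟨ha1, ha2⟩ := Finset.mem_filter.1 ha
      exact Finset.mem_biUnion.2 ⟨b, hb, Finset.mem_filter.2 ⟨ha1, ha2.2⟩⟩
    obtain ⟨f, hf1, hf2⟩ := (Finset.all_card_le_biUnion_card_iff_exists_injective _).1 hhall
    refine ⟨fun b => if h : b ∈ ℬ then f ⟨b, h⟩ else ⟨0, Function.Embedding.ofIsEmpty⟩, ?_, ?_⟩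
    · intro a ha b hb hab
      have ha' : a ∈ ℬ := ha
      have hb' : b ∈ ℬ := hb
      simp only [ha', hb', dif_pos] at hab
      exact congrArg Subtype.val (hf1 hab)
    · intro b hb
      simp only [hb, dif_pos]
      exact Finset.mem_filter.1 (hf2 ⟨b, hb⟩)
end
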